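/- arXiv:1709.03896 — 5 statements merged into one kernel-verified Lean document; each statement's English description precedes it below -/
import Mathlib

section
/- Let E = EuclideanSpace ℝ (Fin N), let f : E → ℝ, let Δt > 0, let M, C : E →ₗ[ℝ] E be self-adjoint linear maps, and let G : E × E → E satisfy the directionality identity ⟪G(x,y), y − x⟫ = f(y) − f(x) for all x, y ∈ E. Suppose u : ℕ → E satisfies, for all n ≥ 1, the two-step scheme M((u(n+1) − 2u(n) + u(n−1))/Δt²) + C((u(n+1) − u(n−1))/(2Δt)) + G((u(n)+u(n−1))/2, (u(n+1)+u(n))/2) = 0. Define v(n) := (u(n) − u(n−1))/Δt, m(n) := (u(n) + u(n−1))/2, and the discrete total energy Π(n) := (1/2)⟪v(n), M v(n)⟫ + f(m(n)). Then for all n ≥ 1, Π(n+1) − Π(n) = −Δt ⟪w(n), C w(n)⟫, where w(n) := (u(n+1) − u(n−1))/(2Δt). -/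
/-!
The scheme is paired with the increment of the midpoints, which is the time step `h` times the
central difference quotient. The term in `G` then becomes the increment of the potential and the
damping term the dissipation. The central quotient is the mean of two consecutive velocities, while
the acceleration is their difference divided by `h`, so symmetry of `M` turns the inertial term into
the increment of the kinetic energy.
-/

open RealInnerProductSpace

section DifferenceQuotient

variable {K V : Type*} [Field K] [AddCommGroup V] [Module K V]

/-- The difference quotient of two states a time `h` apart: the discrete velocity `v` for the time
step `h = Δt`, and the central velocity `w` for `h = 2 * Δt`. -/
def diffQuotient (h : K) (x y : V) : V := h⁻¹ • (y - x)

theorem smul_diffQuotient {h : K} (hh : h ≠ 0) (x y : V) : h • diffQuotient h x y = y - x :=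
  smul_inv_smul₀ hh (y - x)

theorem diffQuotient_two_mul (h : K) (x y z : V) :
    diffQuotient (2 * h) x z = (2 : K)⁻¹ • (diffQuotient h y z + diffQuotient h x y) := by
  simp only [diffQuotient, mul_inv]
  module

theorem inv_sq_smul_second_difference (h : K) (x y z : V) :
    (h ^ 2)⁻¹ • (z - (2 : K) • y + x) =
      h⁻¹ • (diffQuotient h y z - diffQuotient h x y) := by
  simp only [diffQuotient, ← inv_pow]
  module

theorem midpoint_sub_midpoint_eq_smul_diffQuotient [Invertible (2 : K)] {h : K} (hh : h ≠ 0)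
    (x y z : V) :
    midpoint K z y - midpoint K y x = h • diffQuotient (2 * h) x z := by
  have htwo : (2 : K) ≠ 0 := Invertible.ne_zero 2
  calc
    midpoint K z y - midpoint K y x = (2 : K)⁻¹ • (z - x) := by
      simp only [midpoint_eq_smul_add, invOf_eq_inv]
      module
    _ = (2 : K)⁻¹ • (2 * h) • diffQuotient (2 * h) x z := by
      rw [smul_diffQuotient (mul_ne_zero htwo hh)]
    _ = h • diffQuotient (2 * h) x z := by
      rw [mul_smul, inv_smul_smul₀ htwo]

end DifferenceQuotient

section EnergyBalance

variable {E : Type*} [SeminormedAddCommGroup E] [InnerProductSpace ℝ E]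

/-- `G` is a discrete gradient of `f`: its inner product with each chord is the increment of `f`
over that chord. The consistency condition `G x x = ∇ f x` is not part of the notion. -/
def IsDiscreteGradient (f : E → ℝ) (G : E → E → E) : Prop :=
  ∀ x y, ⟪G x y, y - x⟫ = f y - f x

/-- The kinetic energy of the velocity `v` for the mass operator `M`. -/
noncomputable def kineticEnergy (M : E →ₗ[ℝ] E) (v : E) : ℝ := (1 / 2 : ℝ) * ⟪v, M v⟫

/-- The discrete total energy `Π` of two consecutive states `x`, `y`: the kinetic energy of their
difference quotient plus the potential `f` at their midpoint. -/
noncomputable def discreteEnergy (M : E →ₗ[ℝ] E) (f : E → ℝ) (h : ℝ) (x y : E) : ℝ :=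
  kineticEnergy M (diffQuotient h x y) + f (midpoint ℝ y x)

theorem inner_map_sub_add_of_isSymmetric {M : E →ₗ[ℝ] E} (hM : M.IsSymmetric) (x y : E) :
    ⟪M (x - y), x + y⟫ = ⟪x, M x⟫ - ⟪y, M y⟫ := by
  have hcross : ⟪x, M y⟫ = ⟪y, M x⟫ := by rw [← hM, real_inner_comm]
  rw [hM, map_add, inner_sub_left, inner_add_right, inner_add_right, hcross]
  ring

theorem inner_map_second_difference_smul_diffQuotient {M : E →ₗ[ℝ] E} (hM : M.IsSymmetric) {h : ℝ}
    (hh : h ≠ 0) (x y z : E) :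
    ⟪M ((h ^ 2)⁻¹ • (z - (2 : ℝ) • y + x)), h • diffQuotient (2 * h) x z⟫ =
      kineticEnergy M (diffQuotient h y z) - kineticEnergy M (diffQuotient h x y) := by
  rw [inv_sq_smul_second_difference, diffQuotient_two_mul h x y z, map_smul,
    real_inner_smul_left, real_inner_smul_right, real_inner_smul_right, inv_mul_cancel_left₀ hh,
    inner_map_sub_add_of_isSymmetric hM, kineticEnergy, kineticEnergy]
  ring

theorem IsDiscreteGradient.inner_midpoint_smul_diffQuotient {f : E → ℝ} {G : E → E → E}
    (hG : IsDiscreteGradient f G) {h : ℝ} (hh : h ≠ 0) (x y z : E) :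
    ⟪G (midpoint ℝ y x) (midpoint ℝ z y), h • diffQuotient (2 * h) x z⟫ =
      f (midpoint ℝ z y) - f (midpoint ℝ y x) := by
  rw [← midpoint_sub_midpoint_eq_smul_diffQuotient hh x y z, hG]

theorem discrete_energy_balance_general {f : E → ℝ} {h : ℝ} (hh : h ≠ 0) {M : E →ₗ[ℝ] E}
    (hM : M.IsSymmetric) {C : E → E} {G : E → E → E} (hG : IsDiscreteGradient f G) {x y z : E}
    (hscheme : M ((h ^ 2)⁻¹ • (z - (2 : ℝ) • y + x)) + C (diffQuotient (2 * h) x z) +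
      G (midpoint ℝ y x) (midpoint ℝ z y) = 0) :
    discreteEnergy M f h y z - discreteEnergy M f h x y =
      -h * ⟪diffQuotient (2 * h) x z, C (diffQuotient (2 * h) x z)⟫ := by
  set w := diffQuotient (2 * h) x z
  have hpaired : ⟪M ((h ^ 2)⁻¹ • (z - (2 : ℝ) • y + x)), h • w⟫ + ⟪C w, h • w⟫ +
      ⟪G (midpoint ℝ y x) (midpoint ℝ z y), h • w⟫ = 0 := by
    rw [← inner_add_left, ← inner_add_left, hscheme, inner_zero_left]
  have hdissipation : ⟪C w, h • w⟫ = h * ⟪w, C w⟫ := by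
    rw [real_inner_smul_right, real_inner_comm]
  rw [inner_map_second_difference_smul_diffQuotient hM hh, hdissipation,
    hG.inner_midpoint_smul_diffQuotient hh] at hpaired
  simp only [discreteEnergy]
  linarith

end EnergyBalance

/-- Discrete energy balance for the two-step scheme driven by a discrete gradient `G`:
`Π(n+1) − Π(n) = −Δt ⟪w(n), C w(n)⟫`, where `v(n) = (u(n) − u(n−1))/Δt`,
`m(n) = (u(n) + u(n−1))/2`, `Π(n) = (1/2)⟪v(n), M v(n)⟫ + f(m(n))`, and
`w(n) = (u(n+1) − u(n−1))/(2Δt)`. -/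
theorem discrete_energy_balance (N : ℕ)
    (f : EuclideanSpace ℝ (Fin N) → ℝ) (Δt : ℝ) (hΔt : 0 < Δt)
    (M C : EuclideanSpace ℝ (Fin N) →ₗ[ℝ] EuclideanSpace ℝ (Fin N))
    (hM_sa : ∀ x y : EuclideanSpace ℝ (Fin N), ⟪M x, y⟫ = ⟪x, M y⟫)
    (hC_sa : ∀ x y : EuclideanSpace ℝ (Fin N), ⟪C x, y⟫ = ⟪x, C y⟫)
    (G : EuclideanSpace ℝ (Fin N) → EuclideanSpace ℝ (Fin N) → EuclideanSpace ℝ (Fin N))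
    (hG : ∀ x y : EuclideanSpace ℝ (Fin N), ⟪G x y, y - x⟫ = f y - f x)
    (u : ℕ → EuclideanSpace ℝ (Fin N))
    (hu : ∀ n, 1 ≤ n →
      M ((Δt ^ 2)⁻¹ • (u (n + 1) - (2 : ℝ) • u n + u (n - 1))) +
        C ((2 * Δt)⁻¹ • (u (n + 1) - u (n - 1))) +
        G ((2 : ℝ)⁻¹ • (u n + u (n - 1))) ((2 : ℝ)⁻¹ • (u (n + 1) + u n)) = 0) :
    ∀ n, 1 ≤ n →
      ((1/2 : ℝ) * ⟪Δt⁻¹ • (u (n + 1) - u n), M (Δt⁻¹ • (u (n + 1) - u n))⟫ +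
          f ((2 : ℝ)⁻¹ • (u (n + 1) + u n))) -
        ((1/2 : ℝ) * ⟪Δt⁻¹ • (u n - u (n - 1)), M (Δt⁻¹ • (u n - u (n - 1)))⟫ +
          f ((2 : ℝ)⁻¹ • (u n + u (n - 1)))) =
      -Δt * ⟪(2 * Δt)⁻¹ • (u (n + 1) - u (n - 1)),
              C ((2 * Δt)⁻¹ • (u (n + 1) - u (n - 1)))⟫ := by
  intro n hn
  simpa only [discreteEnergy, kineticEnergy, diffQuotient, midpoint_eq_smul_add, invOf_eq_inv] using
    discrete_energy_balance_general hΔt.ne' hM_sa (C := C) hG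
      (by simpa only [diffQuotient, midpoint_eq_smul_add, invOf_eq_inv] using hu n hn)
end

section
/- Let E = EuclideanSpace ℝ (Fin N), let U ⊆ E be open and convex, and let f : U → ℝ be three times continuously differentiable. Let a, b ∈ U and suppose ‖iteratedFDeriv ℝ 3 f z‖ ≤ K for all z on the segment [a,b]. Then |f(b) − f(a) − (fderiv ℝ f ((a+b)/2)) (b − a)| ≤ (K/24) ‖b − a‖³. -/
open RealInnerProductSpace

/-!
Expand `f` to second order around the midpoint `m` of `a` and `b`. The displacements `b - m` and
`a - m` are opposite, so the even terms cancel in `f b - f a`, and the two linear terms add up to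
`Df(m)(b - a)`. What is left are two Taylor remainders, each at most
`K / 3! * ‖(b - a) / 2‖ ^ 3 = K / 48 * ‖b - a‖ ^ 3`.
-/

open Set
open scoped Nat

variable {E F : Type*} [NormedAddCommGroup E] [NormedSpace ℝ E]
  [NormedAddCommGroup F] [NormedSpace ℝ F]

lemma norm_integral_one_sub_pow_smul_le {g : ℝ → F} {C : ℝ} (n : ℕ)
    (hg : ∀ t ∈ Icc (0 : ℝ) 1, ‖g t‖ ≤ C) :
    ‖∫ t in (0 : ℝ)..1, (1 - t) ^ n • g t‖ ≤ C / (n + 1) := by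
  have hbound : ∀ t ∈ Ioc (0 : ℝ) 1, ‖(1 - t) ^ n • g t‖ ≤ (1 - t) ^ n * C := by
    intro t ht
    have hpow : 0 ≤ (1 - t) ^ n := pow_nonneg (sub_nonneg.2 ht.2) n
    rw [norm_smul, Real.norm_of_nonneg hpow]
    exact mul_le_mul_of_nonneg_left (hg t (Ioc_subset_Icc_self ht)) hpow
  calc ‖∫ t in (0 : ℝ)..1, (1 - t) ^ n • g t‖
      ≤ ∫ t in (0 : ℝ)..1, (1 - t) ^ n * C :=
        intervalIntegral.norm_integral_le_of_norm_le zero_le_one (.of_forall hbound)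
          (Continuous.intervalIntegrable (by fun_prop) 0 1)
    _ = (∫ t in (0 : ℝ)..1, t ^ n) * C := by
        rw [intervalIntegral.integral_mul_const,
          intervalIntegral.integral_comp_sub_left (fun t : ℝ => t ^ n), sub_self, sub_zero]
    _ = C / (n + 1) := by
        rw [integral_pow, one_pow, zero_pow n.succ_ne_zero]
        ring

variable [CompleteSpace F] {f : E → F}

theorem norm_sub_sum_iteratedFDeriv_le {x y : E} {n : ℕ} {C : ℝ}
    (hf : ∀ z ∈ segment ℝ x y, ContDiffAt ℝ (n + 1) f z)
    (hC : ∀ z ∈ segment ℝ x y, ‖iteratedFDeriv ℝ (n + 1) f z‖ ≤ C) :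
    ‖f y - ∑ k ∈ Finset.range (n + 1), (k ! : ℝ)⁻¹ • iteratedFDeriv ℝ k f x fun _ => y - x‖ ≤
      C / (n + 1)! * ‖y - x‖ ^ (n + 1) := by
  have hseg : ∀ t ∈ Icc (0 : ℝ) 1, x + t • (y - x) ∈ segment ℝ x y := fun t ht => by
    rw [segment_eq_image']
    exact mem_image_of_mem _ ht
  have hderiv : ∀ t ∈ Icc (0 : ℝ) 1,
      ‖iteratedFDeriv ℝ (n + 1) f (x + t • (y - x)) fun _ => y - x‖ ≤ C * ‖y - x‖ ^ (n + 1) :=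
    fun t ht => by
      simpa only [Finset.prod_const, Finset.card_univ, Fintype.card_fin] using
        ContinuousMultilinearMap.le_of_opNorm_le (hC _ (hseg t ht)) fun _ => y - x
  have htaylor := map_add_eq_sum_add_integral_iteratedFDeriv fun t ht => hf _ (hseg t ht)
  rw [add_sub_cancel] at htaylor
  rw [htaylor, add_sub_cancel_left, norm_smul, norm_inv, Real.norm_natCast]
  calc (n ! : ℝ)⁻¹ * ‖∫ t in (0 : ℝ)..1,
          (1 - t) ^ n • iteratedFDeriv ℝ (n + 1) f (x + t • (y - x)) fun _ => y - x‖
      ≤ (n ! : ℝ)⁻¹ * (C * ‖y - x‖ ^ (n + 1) / (n + 1)) := by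
        gcongr
        exact norm_integral_one_sub_pow_smul_le n hderiv
    _ = C / (n + 1)! * ‖y - x‖ ^ (n + 1) := by
        rw [Nat.factorial_succ]
        push_cast
        field_simp

lemma norm_sub_taylor_two_le {x y : E} {C : ℝ}
    (hf : ∀ z ∈ segment ℝ x y, ContDiffAt ℝ 3 f z)
    (hC : ∀ z ∈ segment ℝ x y, ‖iteratedFDeriv ℝ 3 f z‖ ≤ C) :
    ‖f y - (f x + fderiv ℝ f x (y - x) +
        (2 : ℝ)⁻¹ • fderiv ℝ (fderiv ℝ f) x (y - x) (y - x))‖ ≤ C / 6 * ‖y - x‖ ^ 3 := by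
  have h := norm_sub_sum_iteratedFDeriv_le (n := 2) (by simpa [two_add_one_eq_three] using hf) hC
  simpa [Finset.sum_range_succ, iteratedFDeriv_two_apply, Nat.factorial] using h

theorem midpoint_taylor_remainder_bound_general {a b : E} {K : ℝ}
    (hf : ∀ z ∈ segment ℝ a b, ContDiffAt ℝ 3 f z)
    (hK : ∀ z ∈ segment ℝ a b, ‖iteratedFDeriv ℝ 3 f z‖ ≤ K) :
    ‖f b - f a - fderiv ℝ f (midpoint ℝ a b) (b - a)‖ ≤ K / 24 * ‖b - a‖ ^ 3 := by
  set m := midpoint ℝ a b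
  set h := (2 : ℝ)⁻¹ • (b - a)
  have hbm : b - m = h := by rw [right_sub_midpoint, invOf_eq_inv]
  have ham : a - m = -h := by rw [left_sub_midpoint, invOf_eq_inv, ← smul_neg, neg_sub]
  have hba : b - a = (2 : ℝ) • h := (smul_inv_smul₀ two_ne_zero _).symm
  have hnorm : ‖b - a‖ = 2 * ‖h‖ := by rw [hba, norm_smul, Real.norm_ofNat]
  have hm : m ∈ segment ℝ a b := midpoint_mem_segment a b
  have hsegb : segment ℝ m b ⊆ segment ℝ a b :=
    (convex_segment a b).segment_subset hm (right_mem_segment ℝ a b)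
  have hsega : segment ℝ m a ⊆ segment ℝ a b :=
    (convex_segment a b).segment_subset hm (left_mem_segment ℝ a b)
  have hb := norm_sub_taylor_two_le (fun z hz => hf z (hsegb hz)) fun z hz => hK z (hsegb hz)
  have ha := norm_sub_taylor_two_le (fun z hz => hf z (hsega hz)) fun z hz => hK z (hsega hz)
  simp only [hbm] at hb
  simp only [ham, map_neg, neg_apply, neg_neg, norm_neg] at ha
  set Q := (2 : ℝ)⁻¹ • fderiv ℝ (fderiv ℝ f) m h h
  calc ‖f b - f a - fderiv ℝ f m (b - a)‖
      = ‖(f b - (f m + fderiv ℝ f m h + Q)) - (f a - (f m + -fderiv ℝ f m h + Q))‖ := by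
        rw [hba, map_smul]
        congr 1
        module
    _ ≤ K / 6 * ‖h‖ ^ 3 + K / 6 * ‖h‖ ^ 3 := norm_sub_le_of_le hb ha
    _ = K / 24 * ‖b - a‖ ^ 3 := by
        rw [hnorm]
        ring

/-- Cubic midpoint-remainder bound: if `f` is `C³` on an open convex set `U` containing
`a` and `b`, and the third derivative is bounded by `K` on the segment `[a, b]`, then
`|f(b) − f(a) − Df((a+b)/2)(b − a)| ≤ (K/24)‖b − a‖³`. -/
theorem midpoint_taylor_remainder_bound (N : ℕ)
    (U : Set (EuclideanSpace ℝ (Fin N))) (hU_open : IsOpen U) (hU_conv : Convex ℝ U)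
    (f : EuclideanSpace ℝ (Fin N) → ℝ) (hf : ContDiffOn ℝ 3 f U)
    (a b : EuclideanSpace ℝ (Fin N)) (ha : a ∈ U) (hb : b ∈ U)
    (K : ℝ)
    (hK : ∀ z ∈ segment ℝ a b, ‖iteratedFDeriv ℝ 3 f z‖ ≤ K) :
    |f b - f a - (fderiv ℝ f ((2 : ℝ)⁻¹ • (a + b))) (b - a)| ≤
      K / 24 * ‖b - a‖ ^ 3 := by
  rw [← invOf_eq_inv, ← midpoint_eq_smul_add, ← Real.norm_eq_abs]
  exact midpoint_taylor_remainder_bound_general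
    (fun z hz => hf.contDiffAt (hU_open.mem_nhds (hU_conv.segment_subset ha hb hz))) hK
end

section
/- Let E = EuclideanSpace ℝ (Fin N), let U ⊆ E be open and convex, and let f : U → ℝ be three times continuously differentiable with ‖iteratedFDeriv ℝ 3 f z‖ ≤ K for all z ∈ U. Let W : E →ₗ[ℝ] E be self-adjoint with constants 0 < μ and Λ such that μ‖δ‖² ≤ ⟪δ, W δ⟫ and ‖W δ‖ ≤ Λ‖δ‖ for all δ ∈ E. Define the Gonzalez flux G_GS(a,b) := ∇f((a+b)/2) + ((f(b) − f(a) − ⟪∇f((a+b)/2), b−a⟫)/⟪b−a, W(b−a)⟫) • W(b−a) for a ≠ b. Then for all a ≠ b in U with [a,b] ⊆ U, ‖G_GS(a,b) − ∇f((a+b)/2)‖ ≤ (K Λ/(24 μ)) ‖b − a‖². -/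
open RealInnerProductSpace

/-!
Expand `f` to second order around the midpoint `m` of `a` and `b`, at the two endpoints
`m ± (b - a) / 2`. In the difference `f b - f a` the even terms cancel, so that
`f b - f a - ⟪∇f m, b - a⟫` consists of two Taylor remainders only. With `K` a bound on the
third derivative each is at most `K / 6 * (‖b - a‖ / 2) ^ 3`, which makes
`K / 24 * ‖b - a‖ ^ 3` in total. Dividing by `⟪b - a, W (b - a)⟫ ≥ μ * ‖b - a‖ ^ 2` and
multiplying by `‖W (b - a)‖ ≤ Λ * ‖b - a‖` costs one power of `‖b - a‖`.
-/

section Taylor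

open scoped Nat

variable {E F : Type*} [NormedAddCommGroup E] [NormedSpace ℝ E]
  [NormedAddCommGroup F] [NormedSpace ℝ F] [CompleteSpace F]
  {f : E → F} {C : ℝ}

theorem norm_map_add_sub_sum_iteratedFDeriv_le {n : ℕ} {x y : E}
    (hf : ∀ z ∈ segment ℝ x (x + y), ContDiffAt ℝ (n + 1) f z)
    (hC : ∀ z ∈ segment ℝ x (x + y), ‖iteratedFDeriv ℝ (n + 1) f z‖ ≤ C) :
    ‖f (x + y) - ∑ k ∈ Finset.range (n + 1), (k ! : ℝ)⁻¹ • iteratedFDeriv ℝ k f x (fun _ ↦ y)‖ ≤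
      C * ‖y‖ ^ (n + 1) / (n + 1)! := by
  have mem_segment : ∀ t ∈ Set.Icc (0 : ℝ) 1, x + t • y ∈ segment ℝ x (x + y) := fun t ht ↦
    (convex_segment x (x + y)).add_smul_mem (left_mem_segment ℝ x _) (right_mem_segment ℝ x _) ht
  have integrand_le : ∀ t ∈ Set.Ioc (0 : ℝ) 1,
      ‖(1 - t) ^ n • iteratedFDeriv ℝ (n + 1) f (x + t • y) (fun _ ↦ y)‖ ≤
        (1 - t) ^ n * (C * ‖y‖ ^ (n + 1)) := by
    intro t ht
    have : 0 ≤ 1 - t := sub_nonneg.mpr ht.2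
    rw [norm_smul, norm_pow, Real.norm_of_nonneg this]
    gcongr
    refine ContinuousMultilinearMap.le_of_opNorm_le
      (hC _ (mem_segment t (Set.Ioc_subset_Icc_self ht))) _ |>.trans_eq ?_
    simp
  have integral_weight : ∫ t in (0 : ℝ)..1, (1 - t) ^ n = 1 / (n + 1) := by
    simp [intervalIntegral.integral_comp_sub_left fun t : ℝ ↦ t ^ n]
  rw [map_add_eq_sum_add_integral_iteratedFDeriv fun t ht ↦ hf _ (mem_segment t ht),
    add_sub_cancel_left, norm_smul, norm_inv, Real.norm_natCast]
  calc (n ! : ℝ)⁻¹ *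
        ‖∫ t in 0..1, (1 - t) ^ n • iteratedFDeriv ℝ (n + 1) f (x + t • y) (fun _ ↦ y)‖
    _ ≤ (n ! : ℝ)⁻¹ * ∫ t in (0 : ℝ)..1, (1 - t) ^ n * (C * ‖y‖ ^ (n + 1)) := by
      gcongr
      exact intervalIntegral.norm_integral_le_of_norm_le zero_le_one
        (.of_forall integrand_le) (Continuous.intervalIntegrable (by fun_prop) _ _)
    _ = C * ‖y‖ ^ (n + 1) / (n + 1)! := by
      rw [intervalIntegral.integral_mul_const, integral_weight, Nat.factorial_succ]
      push_cast
      field_simp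

theorem norm_map_add_sub_map_sub_sub_two_smul_fderiv_le {x y : E}
    (hf : ∀ z ∈ segment ℝ (x - y) (x + y), ContDiffAt ℝ 3 f z)
    (hC : ∀ z ∈ segment ℝ (x - y) (x + y), ‖iteratedFDeriv ℝ 3 f z‖ ≤ C) :
    ‖f (x + y) - f (x - y) - (2 : ℝ) • fderiv ℝ f x y‖ ≤ C / 3 * ‖y‖ ^ 3 := by
  have x_mem : x ∈ segment ℝ (x - y) (x + y) := mem_segment_sub_add x y
  have half_subset {v : E} (hv : x + v ∈ segment ℝ (x - y) (x + y)) :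
      segment ℝ x (x + v) ⊆ segment ℝ (x - y) (x + y) :=
    (convex_segment _ _).segment_subset x_mem hv
  have taylor {v : E} (hv : x + v ∈ segment ℝ (x - y) (x + y)) :
      ‖f (x + v) - (f x + fderiv ℝ f x v + (2 : ℝ)⁻¹ • fderiv ℝ (fderiv ℝ f) x v v)‖ ≤
        C / 6 * ‖v‖ ^ 3 := by
    have := norm_map_add_sub_sum_iteratedFDeriv_le (n := 2)
      (fun z hz ↦ hf z (half_subset hv hz)) (fun z hz ↦ hC z (half_subset hv hz))
    simpa [Finset.sum_range_succ, iteratedFDeriv_two_apply, Nat.factorial, div_mul_eq_mul_div]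
      using this
  have taylor_add := taylor (right_mem_segment ℝ _ _)
  have taylor_sub := taylor (v := -y) (by simpa [sub_eq_add_neg] using left_mem_segment ℝ _ _)
  simp only [map_neg, neg_apply, neg_neg, norm_neg, ← sub_eq_add_neg] at taylor_sub
  have even_terms_cancel : f (x + y) - f (x - y) - (2 : ℝ) • fderiv ℝ f x y =
      (f (x + y) - (f x + fderiv ℝ f x y + (2 : ℝ)⁻¹ • fderiv ℝ (fderiv ℝ f) x y y)) -
        (f (x - y) - (f x - fderiv ℝ f x y + (2 : ℝ)⁻¹ • fderiv ℝ (fderiv ℝ f) x y y)) := by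
    module
  rw [even_terms_cancel]
  exact (norm_sub_le_of_le taylor_add taylor_sub).trans_eq (by ring)

theorem norm_sub_sub_fderiv_midpoint_le {a b : E}
    (hf : ∀ z ∈ segment ℝ a b, ContDiffAt ℝ 3 f z)
    (hC : ∀ z ∈ segment ℝ a b, ‖iteratedFDeriv ℝ 3 f z‖ ≤ C) :
    ‖f b - f a - fderiv ℝ f (midpoint ℝ a b) (b - a)‖ ≤ C / 24 * ‖b - a‖ ^ 3 := by
  set y := (2 : ℝ)⁻¹ • (b - a) with hy
  have sub_eq : midpoint ℝ a b - y = a := by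
    rw [midpoint_eq_smul_add, invOf_eq_inv]; module
  have add_eq : midpoint ℝ a b + y = b := by
    rw [midpoint_eq_smul_add, invOf_eq_inv]; module
  have central := norm_map_add_sub_map_sub_sub_two_smul_fderiv_le (f := f) (C := C)
    (x := midpoint ℝ a b) (y := y) (by rwa [sub_eq, add_eq]) (by rwa [sub_eq, add_eq])
  rw [sub_eq, add_eq, ← map_smul, hy, smul_inv_smul₀ two_ne_zero, norm_smul, norm_inv,
    Real.norm_ofNat] at central
  exact central.trans_eq (by ring)

end Taylor

section GonzalezFlux

variable {E : Type*} [NormedAddCommGroup E] [InnerProductSpace ℝ E]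

theorem norm_div_inner_smul_le {d w : E} {μ Λ : ℝ} (hd : d ≠ 0) (hμ : 0 < μ)
    (h_lower : μ * ‖d‖ ^ 2 ≤ ⟪d, w⟫) (h_upper : ‖w‖ ≤ Λ * ‖d‖) (c : ℝ) :
    ‖(c / ⟪d, w⟫) • w‖ ≤ |c| * (Λ / (μ * ‖d‖)) := by
  have : 0 < ‖d‖ := norm_pos_iff.mpr hd
  have inner_pos : 0 < ⟪d, w⟫ := lt_of_lt_of_le (by positivity) h_lower
  calc ‖(c / ⟪d, w⟫) • w‖ = |c| / ⟪d, w⟫ * ‖w‖ := by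
        rw [norm_smul, Real.norm_eq_abs, abs_div, abs_of_pos inner_pos]
    _ ≤ |c| / (μ * ‖d‖ ^ 2) * (Λ * ‖d‖) := by gcongr
    _ = |c| * (Λ / (μ * ‖d‖)) := by field_simp

variable [CompleteSpace E]

/-- The Gonzalez flux (discrete gradient) of `f` between `a` and `b`: the gradient at the midpoint,
corrected along `W (b - a)` so that its inner product with `b - a` is `f b - f a`. The weight `W`
is an arbitrary map, and the correction is `0` where `⟪b - a, W (b - a)⟫ = 0`. -/
noncomputable def gonzalezFlux (f : E → ℝ) (W : E → E) (a b : E) : E :=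
  gradient f (midpoint ℝ a b) +
    ((f b - f a - ⟪gradient f (midpoint ℝ a b), b - a⟫) / ⟪b - a, W (b - a)⟫) • W (b - a)

theorem gonzalezFlux_second_order_consistency_general {f : E → ℝ} {W : E → E} {a b : E}
    {K μ Λ : ℝ} (hab : a ≠ b)
    (hf : ∀ z ∈ segment ℝ a b, ContDiffAt ℝ 3 f z)
    (hK : ∀ z ∈ segment ℝ a b, ‖iteratedFDeriv ℝ 3 f z‖ ≤ K) (hμ : 0 < μ)
    (hW_lower : μ * ‖b - a‖ ^ 2 ≤ ⟪b - a, W (b - a)⟫)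
    (hW_upper : ‖W (b - a)‖ ≤ Λ * ‖b - a‖) :
    ‖gonzalezFlux f W a b - gradient f (midpoint ℝ a b)‖ ≤ K * Λ / (24 * μ) * ‖b - a‖ ^ 2 := by
  have hd : b - a ≠ 0 := sub_ne_zero.mpr hab.symm
  have hd' : 0 < ‖b - a‖ := norm_pos_iff.mpr hd
  have hΛ : 0 ≤ Λ := nonneg_of_mul_nonneg_left ((norm_nonneg _).trans hW_upper) hd'
  have numerator_le : |f b - f a - ⟪gradient f (midpoint ℝ a b), b - a⟫| ≤
      K / 24 * ‖b - a‖ ^ 3 := by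
    rw [inner_gradient_left]
    exact norm_sub_sub_fderiv_midpoint_le hf hK
  rw [gonzalezFlux, add_sub_cancel_left]
  calc _ ≤ |f b - f a - ⟪gradient f (midpoint ℝ a b), b - a⟫| * (Λ / (μ * ‖b - a‖)) :=
        norm_div_inner_smul_le hd hμ hW_lower hW_upper _
    _ ≤ K / 24 * ‖b - a‖ ^ 3 * (Λ / (μ * ‖b - a‖)) := by gcongr
    _ = K * Λ / (24 * μ) * ‖b - a‖ ^ 2 := by field_simp

end GonzalezFlux

/-- Second-order consistency of the Gonzalez flux: under a third-derivative bound `K`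
on `U` and spectral bounds `μ‖δ‖² ≤ ⟪δ, W δ⟫` and `‖W δ‖ ≤ Λ‖δ‖`, the Gonzalez flux
deviates from the midpoint gradient by at most `(K Λ/(24 μ))‖b − a‖²`. -/
theorem gonzalezFlux_second_order_consistency (N : ℕ)
    (U : Set (EuclideanSpace ℝ (Fin N))) (hU_open : IsOpen U) (hU_conv : Convex ℝ U)
    (f : EuclideanSpace ℝ (Fin N) → ℝ) (hf : ContDiffOn ℝ 3 f U)
    (K : ℝ) (hK : ∀ z ∈ U, ‖iteratedFDeriv ℝ 3 f z‖ ≤ K)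
    (W : EuclideanSpace ℝ (Fin N) →ₗ[ℝ] EuclideanSpace ℝ (Fin N))
    (hW_sa : ∀ x y : EuclideanSpace ℝ (Fin N), ⟪W x, y⟫ = ⟪x, W y⟫)
    (μ Λ : ℝ) (hμ : 0 < μ)
    (hW_lower : ∀ δ : EuclideanSpace ℝ (Fin N), μ * ‖δ‖ ^ 2 ≤ ⟪δ, W δ⟫)
    (hW_upper : ∀ δ : EuclideanSpace ℝ (Fin N), ‖W δ‖ ≤ Λ * ‖δ‖) :
    ∀ a b : EuclideanSpace ℝ (Fin N), a ≠ b → a ∈ U → b ∈ U → segment ℝ a b ⊆ U →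
      ‖(gradient f ((2 : ℝ)⁻¹ • (a + b)) +
          ((f b - f a - ⟪gradient f ((2 : ℝ)⁻¹ • (a + b)), b - a⟫) /
              ⟪b - a, W (b - a)⟫) • W (b - a)) -
        gradient f ((2 : ℝ)⁻¹ • (a + b))‖ ≤
      K * Λ / (24 * μ) * ‖b - a‖ ^ 2 := by
  intro a b hab _ _ hseg
  simpa only [gonzalezFlux, midpoint_eq_smul_add, invOf_eq_inv] using
    gonzalezFlux_second_order_consistency_general hab
      (fun z hz ↦ hf.contDiffAt (hU_open.mem_nhds (hseg hz))) (fun z hz ↦ hK z (hseg hz)) hμ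
      (hW_lower (b - a)) (hW_upper (b - a))
end

section
/- Let E = EuclideanSpace ℝ (Fin N), let d ∈ ℕ, and let f : E → ℝ be C^∞ with iteratedFDeriv ℝ κ f x = 0 for all κ > d and all x ∈ E. Define the Taylor-series flux g : E × E → E by requiring, for all x, Δ, e ∈ E, that ⟪g(x,Δ), e⟫ = Σ_{κ=1}^{d} (1/κ!) (iteratedFDeriv ℝ κ f x) applied to (κ−1) copies of Δ followed by e. Then for all x, Δ ∈ E the exact discrete energy identity ⟪g(x,Δ), Δ⟫ = f(x + Δ) − f(x) holds. -/
/-!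
On the diagonal `e = Δ` every slot of the multilinear forms defining `⟪g x Δ, e⟫` holds `Δ`, so
`⟪g x Δ, Δ⟫` is the sum of the terms of orders `1, …, d` of the Taylor expansion of `f (x + Δ)`
about `x`. The term of order `0` is `f x`, and the integral remainder of order `d` vanishes because
its integrand contains `D^(d+1)f`.
-/

open RealInnerProductSpace

section Taylor

variable {E F : Type*} [NormedAddCommGroup E] [NormedSpace ℝ E] [NormedAddCommGroup F]
  [NormedSpace ℝ F] [CompleteSpace F] {f : E → F} {x y : E} {n : ℕ}

lemma map_add_eq_sum_iteratedFDeriv_of_succ_eq_zero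
    (hf : ∀ t ∈ Set.Icc (0 : ℝ) 1, ContDiffAt ℝ (n + 1) f (x + t • y))
    (hzero : ∀ t ∈ Set.Icc (0 : ℝ) 1, iteratedFDeriv ℝ (n + 1) f (x + t • y) (fun _ ↦ y) = 0) :
    f (x + y) = ∑ k ∈ Finset.range (n + 1),
      (k.factorial : ℝ)⁻¹ • iteratedFDeriv ℝ k f x (fun _ ↦ y) := by
  have hremainder : ∫ t in (0 : ℝ)..1,
      (1 - t) ^ n • iteratedFDeriv ℝ (n + 1) f (x + t • y) (fun _ ↦ y) = 0 := by
    refine (intervalIntegral.integral_congr fun t ht ↦ ?_).trans intervalIntegral.integral_zero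
    rw [Set.uIcc_of_le zero_le_one] at ht
    simp only [hzero t ht, smul_zero]
  rw [map_add_eq_sum_add_integral_iteratedFDeriv hf, hremainder, smul_zero, add_zero]

lemma map_add_sub_eq_sum_Icc_iteratedFDeriv_of_succ_eq_zero
    (hf : ∀ t ∈ Set.Icc (0 : ℝ) 1, ContDiffAt ℝ (n + 1) f (x + t • y))
    (hzero : ∀ t ∈ Set.Icc (0 : ℝ) 1, iteratedFDeriv ℝ (n + 1) f (x + t • y) (fun _ ↦ y) = 0) :
    f (x + y) - f x = ∑ k ∈ Finset.Icc 1 n,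
      (k.factorial : ℝ)⁻¹ • iteratedFDeriv ℝ k f x (fun _ ↦ y) := by
  rw [map_add_eq_sum_iteratedFDeriv_of_succ_eq_zero hf hzero, Finset.range_eq_Ico,
    Finset.sum_eq_sum_Ico_succ_bot n.add_one_pos, zero_add, Finset.Ico_add_one_right_eq_Icc]
  simp

end Taylor

theorem taylorFlux_exact_energy_identity_general {E : Type*} [NormedAddCommGroup E]
    [InnerProductSpace ℝ E] {d : ℕ} {f : E → ℝ} (hf : ContDiff ℝ (d + 1) f)
    (hpoly : ∀ x, iteratedFDeriv ℝ (d + 1) f x = 0) {g : E → E → E}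
    (hg : ∀ x Δ e : E, ⟪g x Δ, e⟫ = ∑ κ ∈ Finset.Icc 1 d, (κ.factorial : ℝ)⁻¹ *
      iteratedFDeriv ℝ κ f x (fun i : Fin κ ↦ if (i : ℕ) + 1 = κ then e else Δ))
    (x Δ : E) : ⟪g x Δ, Δ⟫ = f (x + Δ) - f x := by
  have htaylor : f (x + Δ) - f x = ∑ κ ∈ Finset.Icc 1 d,
      (κ.factorial : ℝ)⁻¹ • iteratedFDeriv ℝ κ f x (fun _ ↦ Δ) :=
    map_add_sub_eq_sum_Icc_iteratedFDeriv_of_succ_eq_zero (fun _ _ ↦ hf.contDiffAt)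
      (fun _ _ ↦ by simp only [hpoly, zero_apply])
  simp only [hg, htaylor, ite_self, smul_eq_mul]

/-- Exact discrete energy identity for the Taylor-series flux of a polynomial free
energy density: if all derivatives of `f` of order greater than `d` vanish and
`⟪g(x,Δ), e⟫ = Σ_{κ=1}^{d} (1/κ!) D^κf(x)[Δ,…,Δ,e]`, then
`⟪g(x,Δ), Δ⟫ = f(x + Δ) − f(x)`. -/
theorem taylorFlux_exact_energy_identity (N d : ℕ)
    (f : EuclideanSpace ℝ (Fin N) → ℝ) (hf : ContDiff ℝ (⊤ : ℕ∞) f)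
    (hpoly : ∀ κ : ℕ, d < κ → ∀ x : EuclideanSpace ℝ (Fin N), iteratedFDeriv ℝ κ f x = 0)
    (g : EuclideanSpace ℝ (Fin N) → EuclideanSpace ℝ (Fin N) → EuclideanSpace ℝ (Fin N))
    (hg : ∀ x Δ e : EuclideanSpace ℝ (Fin N), ⟪g x Δ, e⟫ =
      ∑ κ ∈ Finset.Icc 1 d, (κ.factorial : ℝ)⁻¹ *
        (iteratedFDeriv ℝ κ f x) (fun i : Fin κ => if (i : ℕ) + 1 = κ then e else Δ)) :
    ∀ x Δ : EuclideanSpace ℝ (Fin N), ⟪g x Δ, Δ⟫ = f (x + Δ) - f x :=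
  taylorFlux_exact_energy_identity_general (hf.of_le (mod_cast le_top))
    (hpoly (d + 1) d.lt_succ_self) hg
end

section
/- Let E = EuclideanSpace ℝ (Fin N), let d ∈ ℕ, and let f : E → ℝ be C^∞ with iteratedFDeriv ℝ κ f x = 0 for all κ > d and all x ∈ E. Define the Taylor-series flux g : E × E → E by ⟪g(x,Δ), e⟫ = Σ_{κ=1}^{d} (1/κ!) (iteratedFDeriv ℝ κ f x) applied to (κ−1) copies of Δ followed by e. Then for every fixed x ∈ E the map Δ ↦ g(x,Δ) is differentiable, and its Fréchet derivative at every Δ ∈ E is a self-adjoint linear operator on E; that is, ⟪(fderiv ℝ (g(x,·)) Δ) h, e⟫ = ⟪(fderiv ℝ (g(x,·)) Δ) e, h⟫ for all Δ, h, e ∈ E. -/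
/-!
For fixed `x` the flux is the gradient in `Δ` of the potential `∑ κ, D^κ f(x)(Δ, …, Δ) / (κ · κ!)`:
since `D^κ f(x)` is symmetric, each of its `κ` slots contributes the same term
`D^κ f(x)(Δ, …, Δ, ·)` to the derivative of `Δ ↦ D^κ f(x)(Δ, …, Δ)`. The tangent of the flux is
therefore the Hessian of the potential.

Mathlib's `ContDiffAt.iteratedFDeriv_comp_perm` asks for analyticity. For a `C^κ` function, adjacent
transpositions suffice: exchanging the first two slots is the symmetry of the second derivative of
`D^(κ-2) f`, and any other one is a symmetry of `D^(κ-1) f` near `x`, which its derivative inherits.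
-/

open RealInnerProductSpace

section Symmetry

variable {𝕜 E F : Type*} [NontriviallyNormedField 𝕜] [IsRCLikeNormedField 𝕜]
  [NormedAddCommGroup E] [NormedSpace 𝕜 E] [NormedAddCommGroup F] [NormedSpace 𝕜 F] {f : E → F}

lemma iteratedFDeriv_comp_swap_zero_one {n : ℕ} {x : E} (hf : ContDiffAt 𝕜 (n + 2 : ℕ) f x)
    (v : Fin (n + 2) → E) :
    iteratedFDeriv 𝕜 (n + 2) f x (v ∘ Equiv.swap 0 1) = iteratedFDeriv 𝕜 (n + 2) f x v := by
  have hD : ContDiffAt 𝕜 2 (iteratedFDeriv 𝕜 n f) x :=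
    hf.iteratedFDeriv_right (by norm_cast; omega)
  have hD₁ : DifferentiableAt 𝕜 (iteratedFDeriv 𝕜 (n + 1) f) x :=
    hf.differentiableAt_iteratedFDeriv (by norm_cast; omega)
  have hD₂ : DifferentiableAt 𝕜 (fderiv 𝕜 (iteratedFDeriv 𝕜 n f)) x :=
    (hD.fderiv_right (m := 1) (by norm_num)).differentiableAt one_ne_zero
  have eq_fderiv_fderiv (w : Fin (n + 2) → E) : iteratedFDeriv 𝕜 (n + 2) f x w =
      fderiv 𝕜 (fderiv 𝕜 (iteratedFDeriv 𝕜 n f)) x (w 0) (w 1) (Fin.tail (Fin.tail w)) := by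
    simp only [hD₁.iteratedFDeriv_succ_apply_left', iteratedFDeriv_succ_apply_left]
    rw [fderiv_continuousMultilinear_apply_const_apply (by fun_prop),
      fderiv_clm_apply hD₂ (differentiableAt_const _)]
    simp [Fin.tail]
  have tail_tail_swap : Fin.tail (Fin.tail (v ∘ Equiv.swap 0 1)) = Fin.tail (Fin.tail v) := by
    ext i
    simp [Fin.tail, Equiv.swap_apply_of_ne_of_ne, Fin.ext_iff]
  have hsymm : IsSymmSndFDerivAt 𝕜 (iteratedFDeriv 𝕜 n f) x := hD.isSymmSndFDerivAt (by simp)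
  simp [eq_fderiv_fderiv, tail_tail_swap, hsymm.eq (v 0)]

lemma iteratedFDeriv_comp_swap_castSucc_succ {n : ℕ} {x : E}
    (hf : ContDiffAt 𝕜 (n + 1 : ℕ) f x) (v : Fin (n + 1) → E) (i : Fin n) :
    iteratedFDeriv 𝕜 (n + 1) f x (v ∘ Equiv.swap i.castSucc i.succ) =
      iteratedFDeriv 𝕜 (n + 1) f x v := by
  induction n generalizing x with
  | zero => exact i.elim0
  | succ n ih =>
    cases i using Fin.cases with
    | zero => exact iteratedFDeriv_comp_swap_zero_one hf v
    | succ i =>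
      have tail_swap : Fin.tail (v ∘ Equiv.swap i.succ.castSucc i.succ.succ) =
          Fin.tail v ∘ Equiv.swap i.castSucc i.succ := by
        ext j
        simp [Fin.tail, ← (Fin.succ_injective _).map_swap]
      have zero_swap : Equiv.swap i.succ.castSucc i.succ.succ 0 = 0 :=
        Equiv.swap_apply_of_ne_of_ne (by simp [Fin.ext_iff]) (by simp [Fin.ext_iff])
      have hD : DifferentiableAt 𝕜 (iteratedFDeriv 𝕜 (n + 1) f) x :=
        hf.differentiableAt_iteratedFDeriv (by norm_cast; omega)
      have swap_near : (fun y ↦ iteratedFDeriv 𝕜 (n + 1) f y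
          (Fin.tail v ∘ Equiv.swap i.castSucc i.succ)) =ᶠ[nhds x]
          fun y ↦ iteratedFDeriv 𝕜 (n + 1) f y (Fin.tail v) := by
        filter_upwards [hf.eventually (by simp)] with y hy
        exact ih (hy.of_le (by norm_cast; omega)) _ i
      rw [hD.iteratedFDeriv_succ_apply_left', hD.iteratedFDeriv_succ_apply_left', tail_swap,
        swap_near.fderiv_eq, Function.comp_apply, zero_swap]

theorem iteratedFDeriv_comp_perm_of_contDiffAt {n : ℕ} {x : E} (hf : ContDiffAt 𝕜 n f x)
    (v : Fin n → E) (σ : Equiv.Perm (Fin n)) :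
    iteratedFDeriv 𝕜 n f x (v ∘ σ) = iteratedFDeriv 𝕜 n f x v := by
  cases n with
  | zero => rw [Subsingleton.elim (v ∘ σ) v]
  | succ n =>
    have hσ : σ ∈ Submonoid.closure
        (Set.range fun i : Fin n ↦ Equiv.swap i.castSucc i.succ) := by
      simp [Equiv.Perm.mclosure_swap_castSucc_succ]
    induction hσ using Submonoid.closure_induction generalizing v with
    | mem τ hτ =>
      obtain ⟨i, rfl⟩ := hτ
      exact iteratedFDeriv_comp_swap_castSucc_succ hf v i
    | one => rfl
    | mul τ₁ τ₂ _ _ h₁ h₂ => rw [Equiv.Perm.coe_mul, ← Function.comp_assoc, h₂, h₁]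

end Symmetry

section Diagonal

variable {𝕜 ι E F : Type*} [NontriviallyNormedField 𝕜] [NormedAddCommGroup E]
  [NormedSpace 𝕜 E] [NormedAddCommGroup F] [NormedSpace 𝕜 F]

lemma contDiff_diagonal [Finite ι] (A : ContinuousMultilinearMap 𝕜 (fun _ : ι ↦ E) F)
    {n : WithTop ℕ∞} : ContDiff 𝕜 n fun z ↦ A fun _ ↦ z :=
  have := Fintype.ofFinite ι
  A.contDiff.comp (contDiff_pi.2 fun _ ↦ contDiff_id)

lemma hasFDerivAt_diagonal_of_symmetric [Fintype ι] [DecidableEq ι]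
    (A : ContinuousMultilinearMap 𝕜 (fun _ : ι ↦ E) F)
    (hA : ∀ (v : ι → E) (σ : Equiv.Perm ι), A (v ∘ σ) = A v) (i : ι) (y : E) :
    HasFDerivAt (fun z ↦ A fun _ ↦ z)
      (Fintype.card ι • A.toContinuousLinearMap (fun _ ↦ y) i) y := by
  have slot_eq (j : ι) :
      A.toContinuousLinearMap (fun _ ↦ y) j = A.toContinuousLinearMap (fun _ ↦ y) i := by
    ext h
    have update_comp_swap : Function.update (fun _ ↦ y) j h ∘ Equiv.swap i j =
        Function.update (fun _ ↦ y) i h := by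
      rw [Function.update_comp_equiv, Equiv.symm_swap, Equiv.swap_apply_right, Function.comp_def]
    simpa [update_comp_swap] using (hA (Function.update (fun _ ↦ y) j h) (Equiv.swap i j)).symm
  simpa [slot_eq] using HasFDerivAt.multilinear_comp A fun _ : ι ↦ hasFDerivAt_id y

end Diagonal

lemma fderiv_iteratedFDeriv_diagonal {𝕜 E F : Type*} [NontriviallyNormedField 𝕜]
    [IsRCLikeNormedField 𝕜] [NormedAddCommGroup E] [NormedSpace 𝕜 E] [NormedAddCommGroup F]
    [NormedSpace 𝕜 F] {κ : ℕ} {f : E → F} {x : E} (hf : ContDiffAt 𝕜 κ f x) (Δ e : E) :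
    fderiv 𝕜 (fun z ↦ iteratedFDeriv 𝕜 κ f x fun _ ↦ z) Δ e =
      κ • iteratedFDeriv 𝕜 κ f x fun i : Fin κ ↦ if (i : ℕ) + 1 = κ then e else Δ := by
  cases κ with
  | zero => simp
  | succ k =>
    have update_last : Function.update (fun _ ↦ Δ) (Fin.last k) e =
        fun i : Fin (k + 1) ↦ if (i : ℕ) + 1 = k + 1 then e else Δ := by
      ext i
      simp [Function.update_apply, Fin.ext_iff]
    rw [(hasFDerivAt_diagonal_of_symmetric _ (iteratedFDeriv_comp_perm_of_contDiffAt hf)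
      (Fin.last k) Δ).fderiv]
    simp [update_last]

section Gradient

variable {E : Type*} [NormedAddCommGroup E] [InnerProductSpace ℝ E] [CompleteSpace E]
  {P : E → ℝ} {g : E → E} {y : E}

lemma differentiableAt_of_eventually_hasGradientAt (hP : DifferentiableAt ℝ (fderiv ℝ P) y)
    (hg : ∀ᶠ z in nhds y, HasGradientAt P (g z) z) : DifferentiableAt ℝ g y := by
  have hg_eq : g =ᶠ[nhds y] (InnerProductSpace.toDual ℝ E).symm ∘ fderiv ℝ P :=
    hg.mono fun z hz ↦ hz.gradient.symm
  exact ((InnerProductSpace.toDual ℝ E).symm.differentiable.differentiableAt.comp y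
    hP).congr_of_eventuallyEq hg_eq

lemma inner_fderiv_comm_of_eventually_hasGradientAt (hg : ∀ᶠ z in nhds y, HasGradientAt P (g z) z)
    (hg' : DifferentiableAt ℝ g y) (h e : E) : ⟪fderiv ℝ g y h, e⟫ = ⟪fderiv ℝ g y e, h⟫ :=
  second_derivative_symmetric_of_eventually (hg.mono fun _ hz ↦ hz.hasFDerivAt)
    ((innerSL ℝ).hasFDerivAt.comp y hg'.hasFDerivAt) h e

end Gradient

/-- The potential whose gradient in the increment `Δ` is the Taylor-series flux of order `d` of `f`
at `x`. -/
noncomputable def taylorFluxPotential {E : Type*} [NormedAddCommGroup E] [NormedSpace ℝ E]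
    (d : ℕ) (f : E → ℝ) (x Δ : E) : ℝ :=
  ∑ κ ∈ Finset.Icc 1 d, (κ * κ.factorial : ℝ)⁻¹ * iteratedFDeriv ℝ κ f x fun _ ↦ Δ

lemma contDiff_taylorFluxPotential {E : Type*} [NormedAddCommGroup E] [NormedSpace ℝ E]
    (d : ℕ) (f : E → ℝ) (x : E) {n : WithTop ℕ∞} : ContDiff ℝ n (taylorFluxPotential d f x) :=
  ContDiff.sum fun _ _ ↦ contDiff_const.mul (contDiff_diagonal _)

section Flux

variable {E : Type*} [NormedAddCommGroup E] [InnerProductSpace ℝ E] [CompleteSpace E]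

lemma hasGradientAt_taylorFluxPotential {d : ℕ} {f : E → ℝ} {x : E} (hf : ContDiffAt ℝ d f x)
    {w Δ : E} (hw : ∀ e, ⟪w, e⟫ = ∑ κ ∈ Finset.Icc 1 d, (κ.factorial : ℝ)⁻¹ *
      iteratedFDeriv ℝ κ f x fun i : Fin κ ↦ if (i : ℕ) + 1 = κ then e else Δ) :
    HasGradientAt (taylorFluxPotential d f x) w Δ := by
  have hpot : DifferentiableAt ℝ (taylorFluxPotential d f x) Δ :=
    (contDiff_taylorFluxPotential d f x).differentiable one_ne_zero Δ
  have hdiag (κ : ℕ) : DifferentiableAt ℝ (fun z ↦ iteratedFDeriv ℝ κ f x fun _ ↦ z) Δ :=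
    (contDiff_diagonal _).differentiable one_ne_zero Δ
  have hfderiv : fderiv ℝ (taylorFluxPotential d f x) Δ = InnerProductSpace.toDual ℝ E w := by
    ext e
    unfold taylorFluxPotential
    rw [fderiv_fun_sum fun κ _ ↦ (hdiag κ).const_mul _, InnerProductSpace.toDual_apply_apply, hw,
      sum_apply]
    refine Finset.sum_congr rfl fun κ hκ ↦ ?_
    have hκ_ne : (κ : ℝ) ≠ 0 := by
      exact_mod_cast Nat.one_le_iff_ne_zero.1 (Finset.mem_Icc.1 hκ).1
    have hfκ : ContDiffAt ℝ κ f x := hf.of_le (by exact_mod_cast (Finset.mem_Icc.1 hκ).2)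
    rw [fderiv_const_mul (hdiag κ), smul_apply, fderiv_iteratedFDeriv_diagonal hfκ]
    simp only [nsmul_eq_mul, smul_eq_mul]
    field_simp
  rw [hasGradientAt_iff_hasFDerivAt, ← hfderiv]
  exact hpot.hasFDerivAt

theorem taylorFlux_tangent_symmetric_general {d : ℕ} {f : E → ℝ} {x : E}
    (hf : ContDiffAt ℝ d f x) {g : E → E}
    (hg : ∀ Δ e, ⟪g Δ, e⟫ = ∑ κ ∈ Finset.Icc 1 d, (κ.factorial : ℝ)⁻¹ *
      iteratedFDeriv ℝ κ f x fun i : Fin κ ↦ if (i : ℕ) + 1 = κ then e else Δ) :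
    Differentiable ℝ g ∧ ∀ Δ h e : E, ⟪fderiv ℝ g Δ h, e⟫ = ⟪fderiv ℝ g Δ e, h⟫ := by
  have hgrad (Δ : E) : ∀ᶠ z in nhds Δ, HasGradientAt (taylorFluxPotential d f x) (g z) z :=
    .of_forall fun z ↦ hasGradientAt_taylorFluxPotential hf (hg z)
  have hpot : Differentiable ℝ (fderiv ℝ (taylorFluxPotential d f x)) :=
    ((contDiff_taylorFluxPotential d f x).fderiv_right (m := 1) le_rfl).differentiable one_ne_zero
  have hdiff : Differentiable ℝ g := fun Δ ↦
    differentiableAt_of_eventually_hasGradientAt (hpot Δ) (hgrad Δ)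
  exact ⟨hdiff, fun Δ ↦ inner_fderiv_comm_of_eventually_hasGradientAt (hgrad Δ) (hdiff Δ)⟩

end Flux

/-- Symmetry of the tangent of the Taylor-series flux: for each fixed `x`, the map
`Δ ↦ g(x,Δ)` is differentiable and its Fréchet derivative at every point is a
self-adjoint operator. -/
theorem taylorFlux_tangent_symmetric (N d : ℕ)
    (f : EuclideanSpace ℝ (Fin N) → ℝ) (hf : ContDiff ℝ (⊤ : ℕ∞) f)
    (hpoly : ∀ κ : ℕ, d < κ → ∀ x : EuclideanSpace ℝ (Fin N), iteratedFDeriv ℝ κ f x = 0)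
    (g : EuclideanSpace ℝ (Fin N) → EuclideanSpace ℝ (Fin N) → EuclideanSpace ℝ (Fin N))
    (hg : ∀ x Δ e : EuclideanSpace ℝ (Fin N), ⟪g x Δ, e⟫ =
      ∑ κ ∈ Finset.Icc 1 d, (κ.factorial : ℝ)⁻¹ *
        (iteratedFDeriv ℝ κ f x) (fun i : Fin κ => if (i : ℕ) + 1 = κ then e else Δ)) :
    ∀ x : EuclideanSpace ℝ (Fin N),
      Differentiable ℝ (g x) ∧
      ∀ Δ h e : EuclideanSpace ℝ (Fin N),
        ⟪(fderiv ℝ (g x) Δ) h, e⟫ = ⟪(fderiv ℝ (g x) Δ) e, h⟫ := by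
  exact fun x ↦ taylorFlux_tangent_symmetric_general
    (hf.contDiffAt.of_le (by exact_mod_cast le_top)) (hg x)
end
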